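/- Let X = φ ⊗ ψ̄ be the rank-one operator (Xf)(t) = ⟨f,ψ⟩φ(t) on L²(ℝ), with φ, ψ smooth and compactly supported, and let a be a positive integer, N = ℤ × aℤ. Define X̃ = Σ_{j=0}^{a-1} M_{g_j} ρ(-j/a, 0, 1), where g_j(θ,σ) = (Zφ)(θ,σ)·conj((Zψ)(θ,σ - j/a)). Then for every smooth compactly supported f, the square partial sums Σ_{|k|≤L, |l|≤L} ρ(k, la, 1) X ρ(k, la, 1)^{-1} f converge in L²(ℝ) to a^{-1} X̃ f as L → ∞. -/

import Mathlib

open Complex MeasureTheory Filter Topology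

/-- The Schrödinger representation acting pointwise:
`(ρ(x,y,z)φ)(t) = z e^{πi(xy+2yt)} φ(t+x)`. -/
noncomputable def rho (x y : ℝ) (z : ℂ) (φ : ℝ → ℂ) : ℝ → ℂ := fun t =>
  z * Complex.exp (Real.pi * Complex.I * (x * y + 2 * y * t)) * φ (t + x)

/-- The Zak transform `(Zφ)(θ,σ) = Σ_{l∈ℤ} φ(σ-l) e^{2πilθ}` (this formula on all of `ℝ²`
is the quasi-periodic extension). -/
noncomputable def zak (φ : ℝ → ℂ) (θ σ : ℝ) : ℂ :=
  ∑' l : ℤ, φ (σ - l) * Complex.exp (2 * Real.pi * Complex.I * l * θ)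

/-- The `L²` inner product `⟨f, g⟩ = ∫ f(t) conj(g(t)) dt`. -/
noncomputable def l2inner (f g : ℝ → ℂ) : ℂ := ∫ t : ℝ, f t * (starRingEnd ℂ) (g t)

/-- `M_g h = Z⁻¹(g · Zh)` evaluated pointwise via `(Z⁻¹F)(t) = ∫₀¹ F(θ,t) dθ`. -/
noncomputable def Mmul (g : ℝ → ℝ → ℂ) (h : ℝ → ℂ) : ℝ → ℂ := fun t =>
  ∫ θ in (0 : ℝ)..1, g θ t * zak h θ t


lemma exists_vanish {φ : ℝ → ℂ} (h : HasCompactSupport φ) : ∃ R : ℝ, ∀ x, R < |x| → φ x = 0 := by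
  obtain ⟨R, hR⟩ := h.isCompact.isBounded.subset_closedBall 0
  refine ⟨R, fun x hx => ?_⟩
  by_contra hne
  have := hR (subset_tsupport φ hne)
  simp at this
  linarith

lemma zak_eq_sum {φ : ℝ → ℂ} {σ : ℝ} (S : Finset ℤ) (h : ∀ l : ℤ, l ∉ S → φ (σ - l) = 0) (θ : ℝ) :
    zak φ θ σ = ∑ l ∈ S, φ (σ - l) * Complex.exp (2 * Real.pi * Complex.I * l * θ) := by
  unfold zak
  apply tsum_eq_sum
  intro l hl
  simp [h l hl]

lemma integral_char (k : ℤ) :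
    ∫ θ in (0 : ℝ)..1, Complex.exp (2 * Real.pi * Complex.I * k * θ) = if k = 0 then 1 else 0 := by
  split_ifs with h
  · simp [h]
  · rw [integral_exp_mul_complex]
    · have : Complex.exp (2 * Real.pi * Complex.I * k * (1 : ℝ)) = 1 := by
        rw [Complex.exp_eq_one_iff]
        exact ⟨k, by push_cast; ring⟩
      rw [this]; simp
    · simp [Real.pi_ne_zero, h]

lemma triple_integral (S : Finset ℤ) (p q r : ℤ → ℂ) (hq : ∀ m, m ∉ S → q m = 0) :
    ∫ θ in (0 : ℝ)..1, ((∑ l ∈ S, p l * Complex.exp (2 * Real.pi * Complex.I * l * θ)) *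
      (starRingEnd ℂ) (∑ l ∈ S, q l * Complex.exp (2 * Real.pi * Complex.I * l * θ))) *
      (∑ l ∈ S, r l * Complex.exp (2 * Real.pi * Complex.I * l * θ)) =
    ∑ l ∈ S, p l * ∑ n ∈ S, r n * (starRingEnd ℂ) (q (l + n)) := by
  have key : ∀ θ : ℝ, ((∑ l ∈ S, p l * Complex.exp (2 * Real.pi * Complex.I * l * θ)) *
      (starRingEnd ℂ) (∑ l ∈ S, q l * Complex.exp (2 * Real.pi * Complex.I * l * θ))) *
      (∑ l ∈ S, r l * Complex.exp (2 * Real.pi * Complex.I * l * θ)) =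
      ∑ l ∈ S, ∑ n ∈ S, ∑ m ∈ S, (p l * (r n * (starRingEnd ℂ) (q m))) *
        Complex.exp (2 * Real.pi * Complex.I * ((l + n - m : ℤ) : ℂ) * θ) := by
    intro θ
    rw [map_sum, Finset.sum_mul_sum, Finset.sum_mul]
    refine Finset.sum_congr rfl fun l _ => ?_
    rw [Finset.sum_mul_sum, Finset.sum_comm]
    refine Finset.sum_congr rfl fun n _ => Finset.sum_congr rfl fun m _ => ?_
    rw [map_mul, ← Complex.exp_conj]
    have : Complex.exp (2 * Real.pi * Complex.I * ((l + n - m : ℤ) : ℂ) * θ) =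
      Complex.exp (2 * Real.pi * Complex.I * l * θ) *
      Complex.exp ((starRingEnd ℂ) (2 * Real.pi * Complex.I * m * θ)) *
      Complex.exp (2 * Real.pi * Complex.I * n * θ) := by
      rw [← Complex.exp_add, ← Complex.exp_add]
      congr 1
      simp [Complex.conj_ofNat]
      ring
    rw [this]; ring
  simp_rw [key]
  have hi : ∀ (c : ℂ) (k : ℤ), IntervalIntegrable
      (fun θ : ℝ => c * Complex.exp (2 * Real.pi * Complex.I * (k : ℂ) * θ)) volume 0 1 := by
    intro c k
    apply Continuous.intervalIntegrable
    fun_prop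
  rw [intervalIntegral.integral_finsetSum
    (fun l _ => Continuous.intervalIntegrable (by fun_prop) _ _)]
  refine Finset.sum_congr rfl fun l _ => ?_
  rw [intervalIntegral.integral_finsetSum
    (fun n _ => Continuous.intervalIntegrable (by fun_prop) _ _), Finset.mul_sum]
  refine Finset.sum_congr rfl fun n _ => ?_
  rw [intervalIntegral.integral_finsetSum (fun m _ => hi _ _)]
  simp_rw [intervalIntegral.integral_const_mul, integral_char]
  simp_rw [mul_ite, mul_one, mul_zero, sub_eq_zero]
  rw [Finset.sum_ite_eq]
  split_ifs with h
  · rfl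
  · simp [hq _ h]

lemma Mmul_eq {φ ψ f : ℝ → ℂ} (hφs : HasCompactSupport φ) (hψs : HasCompactSupport ψ)
    (hfs : HasCompactSupport f) (K : ℕ)
    (hK : ∀ k : ℤ, k ∉ Finset.Icc (-(K : ℤ)) K → ∀ s, f s * (starRingEnd ℂ) (ψ (s + k)) = 0)
    (x t : ℝ) :
    Mmul (fun θ σ => zak φ θ σ * (starRingEnd ℂ) (zak ψ θ (σ - x))) (rho (-x) 0 1 f) t =
      ∑ k ∈ Finset.Icc (-(K : ℤ)) K, φ (t + k) *
        ∑' n : ℤ, f (t - x - n) * (starRingEnd ℂ) (ψ (t - x - n + k)) := by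
  obtain ⟨R1, h1⟩ := exists_vanish hφs
  obtain ⟨R2, h2⟩ := exists_vanish hψs
  obtain ⟨R3, h3⟩ := exists_vanish hfs
  have hrho : rho (-x) 0 1 f = fun s => f (s - x) := by
    ext s; simp [rho, sub_eq_add_neg]
  obtain ⟨M, hM⟩ := exists_nat_gt (max (K : ℝ) (|t| + |x| + max R1 (max R2 R3)))
  obtain ⟨hMK, hMR⟩ := max_lt_iff.1 hM
  set S := Finset.Icc (-(M : ℤ)) M with hS
  have hout : ∀ l : ℤ, l ∉ S → (M : ℝ) < |(l : ℝ)| := by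
    intro l hl
    have : (M : ℤ) < |l| := by
      by_contra hc
      push Not at hc
      exact hl (Finset.mem_Icc.2 (abs_le.1 hc))
    exact_mod_cast this
  have a1 : ∀ l : ℤ, l ∉ S → φ (t - l) = 0 := by
    intro l hl
    have := hout l hl
    apply h1
    have e := abs_sub_abs_le_abs_sub (l : ℝ) t
    rw [abs_sub_comm] at e
    have := le_max_left R1 (max R2 R3)
    have := abs_nonneg x
    linarith
  have a23 : ∀ l : ℤ, l ∉ S → max R2 R3 < |t - x - l| := by
    intro l hl
    have := hout l hl
    have e := abs_sub_abs_le_abs_sub (l : ℝ) (t - x)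
    rw [abs_sub_comm (l : ℝ) (t - x)] at e
    have e2 := abs_sub t x
    have := le_max_right R1 (max R2 R3)
    linarith
  have a2 : ∀ l : ℤ, l ∉ S → ψ (t - x - l) = 0 := fun l hl =>
    h2 _ ((le_max_left _ _).trans_lt (a23 l hl))
  have a3 : ∀ l : ℤ, l ∉ S → f (t - x - l) = 0 := fun l hl =>
    h3 _ ((le_max_right _ _).trans_lt (a23 l hl))
  have a3' : ∀ l : ℤ, l ∉ S → (fun s => f (s - x)) (t - l) = 0 := by
    intro l hl
    have := a3 l hl
    rwa [sub_right_comm] at this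
  unfold Mmul
  rw [hrho]
  simp_rw [zak_eq_sum S a1, zak_eq_sum S a2, zak_eq_sum (φ := fun s => f (s - x)) (σ := t) S a3']
  rw [triple_integral S (fun l => φ (t - l)) (fun l => ψ (t - x - l)) (fun l => f (t - l - x)) a2]
  have hsub : Finset.Icc (-(K : ℤ)) K ⊆ S := by
    have : (K : ℤ) < M := by exact_mod_cast hMK
    apply Finset.Icc_subset_Icc <;> omega
  rw [Finset.sum_subset hsub]
  · refine Finset.sum_nbij' (fun k => -k) (fun k => -k) ?_ ?_ ?_ ?_ ?_
    · intro k hk; simp only [hS, Finset.mem_Icc] at hk ⊢; omega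
    · intro k hk; simp only [hS, Finset.mem_Icc] at hk ⊢; omega
    · simp
    · simp
    · intro k hk
      rw [tsum_eq_sum (s := S)]
      · push_cast
        rw [← sub_eq_add_neg]
        congr 1
        refine Finset.sum_congr rfl fun n _ => ?_
        rw [sub_right_comm t x n]
        congr 3
        ring
      · intro n hn
        rw [a3 n hn, zero_mul]
  · intro k _ hk
    simp_rw [hK k hk]
    simp

lemma sum_residues (a : ℕ) (ha : 0 < a) (G : ℝ → ℂ) (hG : HasCompactSupport G) (t : ℝ) :
    ∑ j ∈ Finset.range a, ∑' n : ℤ, G (t - (j : ℝ) / a - n) = ∑' m : ℤ, G (t + (m : ℝ) / a) := by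
  have : NeZero a := ⟨ha.ne'⟩
  have ha' : (0 : ℝ) < a := by exact_mod_cast ha
  obtain ⟨R, hR⟩ := exists_vanish hG
  have hsum : Summable (fun m : ℤ => G (t - (m : ℝ) / a)) := by
    obtain ⟨M, hM⟩ := exists_nat_gt ((|t| + R) * a)
    apply summable_of_ne_finset_zero (s := Finset.Icc (-(M : ℤ)) M)
    intro l hl
    have : (M : ℤ) < |l| := by
      by_contra hc
      push Not at hc
      exact hl (Finset.mem_Icc.2 (abs_le.1 hc))
    have h' : (M : ℝ) < |(l : ℝ)| := by exact_mod_cast this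
    apply hR
    have e := abs_sub_abs_le_abs_sub ((l : ℝ) / a) t
    rw [abs_sub_comm, abs_div, abs_of_pos ha'] at e
    have : |t| + R < |(l : ℝ)| / a := by rw [lt_div_iff₀ ha']; linarith
    linarith
  have e1 : ∑' m : ℤ, G (t + (m : ℝ) / a) = ∑' m : ℤ, G (t - (m : ℝ) / a) := by
    rw [← (Equiv.neg ℤ).tsum_eq]
    refine tsum_congr fun m => ?_
    congr 1
    simp; ring
  rw [e1, ← (Int.divModEquiv a).symm.tsum_eq]
  have hs2 := (Int.divModEquiv a).symm.summable_iff.2 hsum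
  rw [← (Equiv.prodComm _ _).tsum_eq]
  have hs3 := (Equiv.prodComm (Fin a) ℤ).summable_iff.2 hs2
  rw [Summable.tsum_prod (by exact hs3), tsum_fintype, Finset.sum_range]
  refine Finset.sum_congr rfl fun j _ => tsum_congr fun n => ?_
  congr 1
  simp
  field_simp
  ring

lemma poisson_a (a : ℕ) (ha : 0 < a) (F : ℝ → ℂ) (hF : ContDiff ℝ (⊤ : ℕ∞) F)
    (hFs : HasCompactSupport F) :
    (Summable fun l : ℤ => ‖∫ s, F s * Complex.exp (-(2 * Real.pi * Complex.I * l * a * s))‖) ∧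
    ∀ t : ℝ, ∑' l : ℤ, (∫ s, F s * Complex.exp (-(2 * Real.pi * Complex.I * l * a * s))) *
      Complex.exp (2 * Real.pi * Complex.I * l * a * t) =
      (a : ℂ)⁻¹ * ∑' m : ℤ, F (t + (m : ℝ) / a) := by
  have ha' : (0 : ℝ) < a := by exact_mod_cast ha
  have haC : (a : ℂ) ≠ 0 := by exact_mod_cast ha.ne'
  have hGs : HasCompactSupport (fun u : ℝ => F (u * (a : ℝ)⁻¹)) :=
    hFs.comp_homeomorph (Homeomorph.mulRight₀ ((a : ℝ)⁻¹) (inv_ne_zero ha'.ne'))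
  have hG : ContDiff ℝ (⊤ : ℕ∞) (fun u : ℝ => F (u * (a : ℝ)⁻¹)) := by fun_prop
  set G := hGs.toSchwartzMap hG with hGdef
  have hGv : ∀ u, G u = F (u * (a : ℝ)⁻¹) := fun u => rfl
  have hFour : ∀ l : ℤ, FourierTransform.fourier G (l : ℝ) =
      a * ∫ s, F s * Complex.exp (-(2 * Real.pi * Complex.I * l * a * s)) := by
    intro l
    rw [SchwartzMap.fourier_coe, Real.fourier_real_eq_integral_exp_smul]
    have := MeasureTheory.Measure.integral_comp_mul_right
      (fun s : ℝ => F s * Complex.exp (-(2 * Real.pi * Complex.I * l * a * s))) ((a : ℝ)⁻¹)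
    rw [inv_inv, abs_of_pos ha'] at this
    rw [Complex.real_smul] at this
    push_cast at this
    rw [← this]
    refine integral_congr_ae (Eventually.of_forall fun u => ?_)
    simp only [hGv, smul_eq_mul]
    rw [mul_comm]
    congr 2
    push_cast
    field_simp
  have hsum : Summable fun l : ℤ => FourierTransform.fourier G (l : ℝ) :=
    summable_of_isBigO (Real.summable_abs_int_rpow one_lt_two)
      (((FourierTransform.fourier G).isBigO_cocompact_rpow (-2)).comp_tendsto
        Int.tendsto_coe_cofinite)
  have hc : ∀ l : ℤ, ∫ s, F s * Complex.exp (-(2 * Real.pi * Complex.I * l * a * s)) =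
      (a : ℂ)⁻¹ * FourierTransform.fourier G (l : ℝ) := by
    intro l; rw [hFour]; field_simp
  constructor
  · simp_rw [hc]
    exact (hsum.mul_left _).norm
  · intro t
    simp_rw [hc]
    have := SchwartzMap.tsum_eq_tsum_fourier G (t * a)
    have e : ∀ m : ℤ, G (t * a + m) = F (t + (m : ℝ) / a) := by
      intro m
      rw [hGv]; congr 1; field_simp
    simp_rw [e] at this
    rw [this, ← tsum_mul_left]
    refine tsum_congr fun l => ?_
    rw [fourier_coe_apply, mul_assoc]
    congr 3
    push_cast
    ring_nf

lemma term_eq (a : ℕ) (φ ψ f : ℝ → ℂ) (k l : ℤ) (t : ℝ) :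
    l2inner f (rho (k : ℝ) ((l : ℝ) * a) 1 ψ) * rho (k : ℝ) ((l : ℝ) * a) 1 φ t =
    φ (t + k) * ((∫ s : ℝ, (f s * (starRingEnd ℂ) (ψ (s + k))) *
        Complex.exp (-(2 * Real.pi * Complex.I * l * a * s))) *
      Complex.exp (2 * Real.pi * Complex.I * l * a * t)) := by
  have h : l2inner f (rho (k : ℝ) ((l : ℝ) * a) 1 ψ) =
      Complex.exp (-(Real.pi * Complex.I * (k * (l * a)))) *
      ∫ s : ℝ, (f s * (starRingEnd ℂ) (ψ (s + k))) *
        Complex.exp (-(2 * Real.pi * Complex.I * l * a * s)) := by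
    unfold l2inner rho
    rw [← integral_const_mul]
    refine integral_congr_ae (Eventually.of_forall fun s => ?_)
    simp only [one_mul, map_mul, ← Complex.exp_conj]
    have : Complex.exp ((starRingEnd ℂ) (Real.pi : ℂ) * (starRingEnd ℂ) Complex.I *
        (starRingEnd ℂ) (((k : ℝ) : ℂ) * (((l : ℝ) * a : ℝ) : ℂ) +
          2 * (((l : ℝ) * a : ℝ) : ℂ) * s)) =
        Complex.exp (-(Real.pi * Complex.I * (k * (l * a)))) *
        Complex.exp (-(2 * Real.pi * Complex.I * l * a * s)) := by
      rw [← Complex.exp_add]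
      congr 1
      simp [Complex.conj_ofNat]
      ring
    rw [this]
    ring
  have h2 : rho (k : ℝ) ((l : ℝ) * a) 1 φ t = Complex.exp (Real.pi * Complex.I * (k * (l * a))) *
      Complex.exp (2 * Real.pi * Complex.I * l * a * t) * φ (t + k) := by
    unfold rho
    rw [one_mul, ← Complex.exp_add]
    congr 2
    push_cast
    ring
  rw [h, h2]
  have h3 : Complex.exp (-(Real.pi * Complex.I * (k * (l * a)))) *
      Complex.exp (Real.pi * Complex.I * (k * (l * a))) = 1 := by
    rw [← Complex.exp_add]; simp
  linear_combination (φ (t + k) * ((∫ s : ℝ, (f s * (starRingEnd ℂ) (ψ (s + k))) *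
        Complex.exp (-(2 * Real.pi * Complex.I * l * a * s))) *
      Complex.exp (2 * Real.pi * Complex.I * l * a * t))) * h3

lemma norm_char (a : ℕ) (l : ℤ) (t : ℝ) :
    ‖Complex.exp (2 * Real.pi * Complex.I * l * a * t)‖ = 1 := by
  have : (2 * Real.pi * Complex.I * l * a * t : ℂ) = ((2 * Real.pi * l * a * t : ℝ) : ℂ) * Complex.I := by
    push_cast; ring
  rw [this, Complex.norm_exp_ofReal_mul_I]

/-- For the rank-one operator `X = φ ⊗ ψ̄` with `φ, ψ` smooth and compactly supported and
`N = ℤ × aℤ`, the square partial sums of `Σ_{n∈N} ρ(n,1) X ρ(n,1)⁻¹ f` converge in `L²(ℝ)`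
to `a⁻¹ X̃ f`, where `X̃ = Σ_{j=0}^{a-1} M_{g_j} ρ(-j/a,0,1)`,
`g_j(θ,σ) = (Zφ)(θ,σ) conj((Zψ)(θ,σ-j/a))`. -/
theorem stmt_15 (a : ℕ) (ha : 0 < a) (φ ψ f : ℝ → ℂ)
    (hφ : ContDiff ℝ (⊤ : ℕ∞) φ) (hφs : HasCompactSupport φ)
    (hψ : ContDiff ℝ (⊤ : ℕ∞) ψ) (hψs : HasCompactSupport ψ)
    (hf : ContDiff ℝ (⊤ : ℕ∞) f) (hfs : HasCompactSupport f) :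
    Tendsto (fun L : ℕ => ∫ t : ℝ,
        ‖(∑ k ∈ Finset.Icc (-(L : ℤ)) L, ∑ l ∈ Finset.Icc (-(L : ℤ)) L,
            l2inner f (rho (k : ℝ) ((l : ℝ) * a) 1 ψ) *
              rho (k : ℝ) ((l : ℝ) * a) 1 φ t) -
          ((a : ℂ))⁻¹ * ∑ j ∈ Finset.range a,
            Mmul (fun θ σ => zak φ θ σ * (starRingEnd ℂ) (zak ψ θ (σ - (j : ℝ) / a)))
              (rho (-(j : ℝ) / a) 0 1 f) t‖ ^ 2)
      atTop (𝓝 0) := by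
  obtain ⟨R2, h2⟩ := exists_vanish hψs
  obtain ⟨R3, h3⟩ := exists_vanish hfs
  obtain ⟨K, hKR⟩ := exists_nat_gt (R2 + R3)
  have hK : ∀ k : ℤ, k ∉ Finset.Icc (-(K : ℤ)) K →
      ∀ s, f s * (starRingEnd ℂ) (ψ (s + k)) = 0 := by
    intro k hk s
    have h0 : (K : ℤ) < |k| := by
      by_contra hc
      push Not at hc
      exact hk (Finset.mem_Icc.2 (abs_le.1 hc))
    have h' : (K : ℝ) < |(k : ℝ)| := by exact_mod_cast h0
    by_cases hs : R3 < |s|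
    · rw [h3 s hs, zero_mul]
    · rw [h2, map_zero, mul_zero]
      have e := abs_sub_abs_le_abs_sub (k : ℝ) (-s)
      rw [abs_neg, sub_neg_eq_add, add_comm (k : ℝ) s] at e
      linarith
  set F : ℤ → ℝ → ℂ := fun k s => f s * (starRingEnd ℂ) (ψ (s + k)) with hFdef
  have hFs : ∀ k, HasCompactSupport (F k) := fun k => hfs.mul_right
  have hFc : ∀ k, ContDiff ℝ (⊤ : ℕ∞) (F k) := by
    intro k
    have h1 : ContDiff ℝ (⊤ : ℕ∞) (fun s : ℝ => ψ (s + k)) := by fun_prop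
    exact hf.mul (Complex.conjCLE.contDiff.comp h1)
  set c : ℤ → ℤ → ℂ := fun k l =>
    ∫ s : ℝ, F k s * Complex.exp (-(2 * Real.pi * Complex.I * l * a * s)) with hcdef
  have hcs : ∀ k, Summable fun l => ‖c k l‖ := fun k => (poisson_a a ha _ (hFc k) (hFs k)).1
  set E : ℤ → ℝ → ℂ := fun l t => Complex.exp (2 * Real.pi * Complex.I * l * a * t) with hEdef
  have hE : ∀ l t, ‖E l t‖ = 1 := fun l t => norm_char a l t
  have hcE : ∀ k t, Summable fun l => c k l * E l t := by
    intro k t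
    apply Summable.of_norm
    simpa [hE] using hcs k
  have hP : ∀ k t, ∑' l : ℤ, c k l * E l t = (a : ℂ)⁻¹ * ∑' m : ℤ, F k (t + (m : ℝ) / a) :=
    fun k => (poisson_a a ha _ (hFc k) (hFs k)).2
  set I := Finset.Icc (-(K : ℤ)) K with hI
  set T : ℝ → ℂ := fun t => ∑ k ∈ I, φ (t + k) * ∑' l : ℤ, c k l * E l t with hT
  have hTeq : ∀ t, ((a : ℂ))⁻¹ * ∑ j ∈ Finset.range a,
            Mmul (fun θ σ => zak φ θ σ * (starRingEnd ℂ) (zak ψ θ (σ - (j : ℝ) / a)))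
              (rho (-(j : ℝ) / a) 0 1 f) t = T t := by
    intro t
    have e : ∀ j : ℕ, Mmul (fun θ σ => zak φ θ σ * (starRingEnd ℂ) (zak ψ θ (σ - (j : ℝ) / a)))
              (rho (-(j : ℝ) / a) 0 1 f) t = ∑ k ∈ I, φ (t + k) *
        ∑' n : ℤ, F k (t - (j : ℝ) / a - n) := by
      intro j
      rw [neg_div]
      exact Mmul_eq hφs hψs hfs K hK _ t
    simp_rw [e]
    rw [Finset.sum_comm, Finset.mul_sum]
    refine Finset.sum_congr rfl fun k _ => ?_
    rw [← Finset.mul_sum, sum_residues a ha (F k) (hFs k), hP]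
    ring
  set P : ℕ → ℝ → ℂ := fun L t => ∑ k ∈ I, φ (t + k) *
    ∑ l ∈ Finset.Icc (-(L : ℤ)) L, c k l * E l t with hPdef
  have hPeq : ∀ L : ℕ, K ≤ L → ∀ t, (∑ k ∈ Finset.Icc (-(L : ℤ)) L,
      ∑ l ∈ Finset.Icc (-(L : ℤ)) L,
            l2inner f (rho (k : ℝ) ((l : ℝ) * a) 1 ψ) *
              rho (k : ℝ) ((l : ℝ) * a) 1 φ t) = P L t := by
    intro L hL t
    simp_rw [term_eq, ← Finset.mul_sum]
    symm
    apply Finset.sum_subset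
    · apply Finset.Icc_subset_Icc <;> omega
    · intro k _ hk
      have : ∀ l, c k l = 0 := by
        intro l
        simp only [hcdef, hFdef, hK k hk]
        simp
      have h4 : ∑ l ∈ Finset.Icc (-(L : ℤ)) L, c k l * E l t = 0 := by simp [this]
      exact mul_eq_zero_of_right _ h4
  have hmain : Tendsto (fun L : ℕ => ∫ t : ℝ, ‖P L t - T t‖ ^ 2) atTop (𝓝 0) := by
    have hlim : ∀ t, Tendsto (fun L => P L t) atTop (𝓝 (T t)) := by
      intro t
      refine tendsto_finsetSum _ fun k _ => Tendsto.const_mul _ ?_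
      exact (hcE k t).hasSum.comp Finset.tendsto_Icc_neg
    have hPc : ∀ L, Continuous (P L) := by
      intro L
      have := hφ.continuous
      simp only [hPdef, hEdef]
      fun_prop
    have hTm : AEStronglyMeasurable T volume :=
      aestronglyMeasurable_of_tendsto_ae atTop (fun L => (hPc L).aestronglyMeasurable)
        (Eventually.of_forall hlim)
    set B : ℝ → ℝ := fun t => ∑ k ∈ I, ‖φ (t + k)‖ * ∑' l, ‖c k l‖ with hB
    have hPB : ∀ L t, ‖P L t‖ ≤ B t := by
      intro L t
      refine (norm_sum_le _ _).trans (Finset.sum_le_sum fun k _ => ?_)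
      rw [norm_mul]
      refine mul_le_mul_of_nonneg_left ?_ (norm_nonneg _)
      refine (norm_sum_le _ _).trans ?_
      simp_rw [norm_mul, hE, mul_one]
      exact (hcs k).sum_le_tsum _ (fun _ _ => norm_nonneg _)
    have hTB : ∀ t, ‖T t‖ ≤ B t := fun t =>
      le_of_tendsto (hlim t).norm (Eventually.of_forall fun L => hPB L t)
    have hBc : Continuous B := by
      have := hφ.continuous
      simp only [hB]
      fun_prop
    have hBs : HasCompactSupport B := by
      have : B = ∑ k ∈ I, fun t : ℝ => ‖φ (t + k)‖ * ∑' l, ‖c k l‖ := by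
        ext t; simp [hB]
      rw [this]
      refine Finset.sum_induction _ HasCompactSupport (fun _ _ h h' => h.add h')
        HasCompactSupport.zero fun k _ => ?_
      exact ((hφs.comp_homeomorph (Homeomorph.addRight (k : ℝ))).norm).mul_right
    have hint : Integrable (fun t => (2 * B t) ^ 2) volume := by
      refine Continuous.integrable_of_hasCompactSupport (by fun_prop) ?_
      exact hBs.comp_left (g := fun x : ℝ => (2 * x) ^ 2) (by simp)
    have := tendsto_integral_of_dominated_convergence (μ := volume)
      (F := fun (L : ℕ) t => ‖P L t - T t‖ ^ 2) (f := fun _ => (0 : ℝ)) (fun t => (2 * B t) ^ 2)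
      (fun L => (((hPc L).aestronglyMeasurable.sub hTm).norm.pow 2)) hint
      (fun L => Eventually.of_forall fun t => by
        rw [Real.norm_of_nonneg (by positivity)]
        refine pow_le_pow_left₀ (norm_nonneg _) ?_ 2
        linarith [norm_sub_le (P L t) (T t), hPB L t, hTB t])
      (Eventually.of_forall fun t => by
        have h5 := ((hlim t).sub_const (T t)).norm.pow 2
        simpa using h5)
    simpa using this
  refine hmain.congr' ?_
  filter_upwards [eventually_ge_atTop K] with L hL
  refine integral_congr_ae (Eventually.of_forall fun t => ?_)
  simp only
  rw [hPeq L hL t, hTeq t]
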